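/- Let D be a finite digraph and let v be a vertex of D. Then adi(D) − 1 ≤ adi(D − v) ≤ adi(D), where D − v is the digraph obtained from D by deleting v. Consequently, if D₁ is an induced subdigraph of D₂, then adi(D₁) ≤ adi(D₂). -/

import Mathlib

open Function

section Defs

variable {V : Type*}

/-- The vertex set `S` contains a directed cycle of the digraph `D`, i.e. there is a
closed directed walk of positive length all of whose vertices lie in `S`. -/
def HasDicycle (D : V → V → Prop) (S : Set V) : Prop :=
  ∃ v, Relation.TransGen (fun a b => a ∈ S ∧ b ∈ S ∧ D a b) v v

/-- A coloring of the vertices of the digraph `D` with `k` colors all of whose color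
classes are acyclic. -/
def IsAcyclicColoring (D : V → V → Prop) {k : ℕ} (c : V → Fin k) : Prop :=
  ∀ i, ¬ HasDicycle D (c ⁻¹' {i})

/-- A complete acyclic coloring of the digraph `D` with exactly `k` colors: every color is
used, every color class is acyclic, and the union of any two distinct color classes
contains a directed cycle. -/
def IsCompleteAcyclicColoring (D : V → V → Prop) {k : ℕ} (c : V → Fin k) : Prop :=
  Surjective c ∧ IsAcyclicColoring D c ∧
    ∀ i j : Fin k, i ≠ j → HasDicycle D (c ⁻¹' {i} ∪ c ⁻¹' {j})

/-- The dichromatic number: the minimum number of colors in an acyclic coloring. -/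
noncomputable def dichromaticNumber (D : V → V → Prop) : ℕ :=
  sInf {k | ∃ c : V → Fin k, IsAcyclicColoring D c}

/-- The adichromatic number: the maximum number of colors in a complete acyclic coloring. -/
noncomputable def adichromaticNumber (D : V → V → Prop) : ℕ :=
  sSup {k | ∃ c : V → Fin k, IsCompleteAcyclicColoring D c}

/-- A coloring of the vertices of the graph `G` all of whose color classes induce forests. -/
def IsArborealColoring (G : SimpleGraph V) {k : ℕ} (c : V → Fin k) : Prop :=
  ∀ i, (G.induce (c ⁻¹' {i})).IsAcyclic

/-- A complete arboreal coloring of `G` with exactly `k` colors: every color is used, every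
color class induces a forest, and the union of any two distinct color classes contains a
cycle. -/
def IsCompleteArborealColoring (G : SimpleGraph V) {k : ℕ} (c : V → Fin k) : Prop :=
  Surjective c ∧ IsArborealColoring G c ∧
    ∀ i j : Fin k, i ≠ j → ¬ (G.induce (c ⁻¹' {i} ∪ c ⁻¹' {j})).IsAcyclic

/-- The vertex arboricity: the minimum number of colors in an arboreal coloring. -/
noncomputable def vertexArboricity (G : SimpleGraph V) : ℕ :=
  sInf {k | ∃ c : V → Fin k, IsArborealColoring G c}

/-- The a-vertex arboricity: the maximum number of colors in a complete arboreal coloring. -/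
noncomputable def avertexArboricity (G : SimpleGraph V) : ℕ :=
  sSup {k | ∃ c : V → Fin k, IsCompleteArborealColoring G c}

/-- The minimum size of a directed feedback vertex set of the digraph `D`. -/
noncomputable def digraphFVSNumber [Fintype V] (D : V → V → Prop) : ℕ :=
  sInf {n | ∃ F : Finset V, F.card = n ∧ ¬ HasDicycle D ((↑F : Set V)ᶜ)}

/-- The minimum size of a feedback vertex set of the graph `G`. -/
noncomputable def graphFVSNumber [Fintype V] (G : SimpleGraph V) : ℕ :=
  sInf {n | ∃ F : Finset V, F.card = n ∧ (G.induce ((↑F : Set V)ᶜ)).IsAcyclic}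

/-- A complete coloring in the sense of the diachromatic number: all classes are acyclic
and for every ordered pair `(i, j)` of distinct colors there is an arc with tail colored
`j` and head colored `i`. -/
def IsCompleteDiColoring (D : V → V → Prop) {k : ℕ} (c : V → Fin k) : Prop :=
  Surjective c ∧ IsAcyclicColoring D c ∧
    ∀ i j : Fin k, i ≠ j → ∃ u v, D u v ∧ c u = j ∧ c v = i

/-- The diachromatic number of the digraph `D`. -/
noncomputable def diachromaticNumber (D : V → V → Prop) : ℕ :=
  sSup {k | ∃ c : V → Fin k, IsCompleteDiColoring D c}

/-- A complete proper coloring of the graph `G`: proper, surjective, and any two distinct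
colors appear together on some edge. -/
def IsCompleteProperColoring (G : SimpleGraph V) {k : ℕ} (c : V → Fin k) : Prop :=
  Surjective c ∧ (∀ u v, G.Adj u v → c u ≠ c v) ∧
    ∀ i j : Fin k, i ≠ j → ∃ u v, G.Adj u v ∧ c u = i ∧ c v = j

/-- The achromatic number: the maximum number of colors in a complete proper coloring. -/
noncomputable def achromaticNumber (G : SimpleGraph V) : ℕ :=
  sSup {k | ∃ c : V → Fin k, IsCompleteProperColoring G c}

/-- The subdigraph of `D` induced by the vertex set `S`. -/
def induceDigraph (D : V → V → Prop) (S : Set V) : S → S → Prop :=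
  fun a b => D a.1 b.1

/-- `D` is an orientation of the simple graph `G`: every arc of `D` is an edge of `G`, and
every edge of `G` is given exactly one of its two possible directions. -/
def IsOrientation (G : SimpleGraph V) (D : V → V → Prop) : Prop :=
  (∀ u v, D u v → G.Adj u v) ∧ ∀ u v, G.Adj u v → Xor' (D u v) (D v u)

end Defs

/-!
Call disjoint nonempty acyclic vertex sets whose pairwise unions contain directed cycles a complete
acyclic family; its members need not cover the vertex set. Such a family never has more than
`adi(D)` members: adding the remaining vertices as singletons gives a partition into acyclic sets,
and a coarsest partition into acyclic sets above it is a complete acyclic coloring, in which two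
members of the family never lie in the same class.

A complete acyclic coloring of an induced subdigraph is such a family in `D`, which gives
monotonicity. Conversely, the classes of a complete acyclic coloring of `D` that avoid the deleted
vertices form such a family in what remains, and each deleted vertex spoils at most one class.
-/

section AdichromaticNumber

variable {V W ι κ : Type*} {D : V → V → Prop}

theorem HasDicycle.mono {S T : Set V} (hS : HasDicycle D S) (hST : S ⊆ T) : HasDicycle D T :=
  let ⟨v, hv⟩ := hS
  ⟨v, hv.lift id fun _ _ ⟨ha, hb, hab⟩ => ⟨hST ha, hST hb, hab⟩⟩

theorem not_hasDicycle_singleton [Std.Irrefl D] (v : V) : ¬ HasDicycle D {v} := by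
  rintro ⟨w, hw⟩
  obtain ⟨u, ⟨rfl, rfl, hloop⟩, -⟩ := Relation.TransGen.head'_iff.1 hw
  exact Std.Irrefl.irrefl _ hloop

theorem hasDicycle_image_iff (f : W → V) (A : Set W) :
    HasDicycle D (f '' A) ↔ HasDicycle (f ⁻¹'o D) A := by
  constructor
  · rintro ⟨v, hv⟩
    obtain ⟨-, ⟨⟨w, -, -⟩, -, -⟩, -⟩ := Relation.TransGen.head'_iff.1 hv
    have : Nonempty W := ⟨w⟩
    refine ⟨invFunOn f A v, hv.lift (invFunOn f A) fun a b ⟨ha, hb, hab⟩ =>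
      ⟨invFunOn_mem ha, invFunOn_mem hb, ?_⟩⟩
    rwa [Order.Preimage, invFunOn_eq ha, invFunOn_eq hb]
  · rintro ⟨w, hw⟩
    exact ⟨f w, hw.lift f fun a b ⟨ha, hb, hab⟩ =>
      ⟨Set.mem_image_of_mem f ha, Set.mem_image_of_mem f hb, hab⟩⟩

/-- The equivalence relation `r` partitions the vertices of `D` into acyclic sets: this is an
acyclic coloring up to the naming of the colors. -/
def IsAcyclicPartition (D : V → V → Prop) (r : Setoid V) : Prop :=
  ∀ x, ¬ HasDicycle D {z | r x z}

/-- The partition obtained from `r` by merging the classes of `x` and `y`. -/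
def mergeClasses (r : Setoid V) (x y : V) : Setoid V where
  r a b := r a b ∨ (r x a ∨ r y a) ∧ (r x b ∨ r y b)
  iseqv := by
    refine ⟨fun a => .inl (r.refl a), fun h => h.imp r.symm And.symm, ?_⟩
    rintro a b c (hab | ⟨ha, hb⟩) (hbc | ⟨hb', hc⟩)
    · exact .inl (r.trans hab hbc)
    · exact .inr ⟨hb'.imp (r.trans · (r.symm hab)) (r.trans · (r.symm hab)), hc⟩
    · exact .inr ⟨ha, hb.imp (r.trans · hbc) (r.trans · hbc)⟩
    · exact .inr ⟨ha, hc⟩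

theorem mergeClasses_apply_left_right (r : Setoid V) (x y : V) : mergeClasses r x y x y :=
  .inr ⟨.inl (r.refl x), .inr (r.refl y)⟩

theorem le_mergeClasses (r : Setoid V) (x y : V) : r ≤ mergeClasses r x y :=
  fun _ _ => .inl

theorem IsAcyclicPartition.mergeClasses {r : Setoid V} (hr : IsAcyclicPartition D r) {x y : V}
    (hxy : ¬ HasDicycle D ({z | r x z} ∪ {z | r y z})) :
    IsAcyclicPartition D (mergeClasses r x y) := by
  intro a ha
  by_cases hmerged : r x a ∨ r y a
  · refine hxy (ha.mono ?_)
    rintro z (haz | ⟨-, hz⟩)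
    exacts [hmerged.imp (r.trans · haz) (r.trans · haz), hz]
  · refine hr a (ha.mono ?_)
    rintro z (haz | ⟨hmerged', -⟩)
    exacts [haz, (hmerged hmerged').elim]

theorem hasDicycle_union_of_maximal {r : Setoid V} (hr : Maximal (IsAcyclicPartition D) r)
    {x y : V} (hxy : ¬ r x y) : HasDicycle D ({z | r x z} ∪ {z | r y z}) := by
  by_contra hacyclic
  exact hxy (hr.le_of_ge (hr.prop.mergeClasses hacyclic) (le_mergeClasses r x y)
    (mergeClasses_apply_left_right r x y))

theorem exists_isCompleteAcyclicColoring_of_maximal {r : Setoid V} [Finite (Quotient r)]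
    (hr : Maximal (IsAcyclicPartition D) r) :
    ∃ (k : ℕ) (c : V → Fin k), IsCompleteAcyclicColoring D c ∧ Setoid.ker c = r := by
  let e := Finite.equivFin (Quotient r)
  let c : V → Fin (Nat.card (Quotient r)) := e ∘ Quotient.mk r
  have hsurj : Surjective c := e.surjective.comp Quotient.mk_surjective
  have hker (x y : V) : c x = c y ↔ r x y := e.injective.eq_iff.trans Quotient.eq
  have hclass (x : V) : c ⁻¹' {c x} = {z | r x z} := by
    ext z
    exact eq_comm.trans (hker x z)
  refine ⟨_, c, ⟨hsurj, ?_, ?_⟩, Setoid.ext hker⟩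
  · refine hsurj.forall.2 fun x => ?_
    rw [hclass]
    exact hr.prop x
  · refine hsurj.forall₂.2 fun x y hxy => ?_
    rw [hclass, hclass]
    exact hasDicycle_union_of_maximal hr (mt (hker x y).2 hxy)

theorem IsAcyclicPartition.exists_isCompleteAcyclicColoring [Finite V] {r : Setoid V}
    (hr : IsAcyclicPartition D r) :
    ∃ (k : ℕ) (c : V → Fin k), IsCompleteAcyclicColoring D c ∧ r ≤ Setoid.ker c := by
  have : Finite (Setoid V) :=
    Finite.of_injective (fun s : Setoid V => s.r) fun _ _ h =>
      Setoid.ext fun a b => iff_of_eq (congrFun₂ h a b)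
  obtain ⟨s, hrs, hs⟩ := (Set.toFinite {s | IsAcyclicPartition D s}).exists_le_maximal hr
  obtain ⟨k, c, hc, rfl⟩ := exists_isCompleteAcyclicColoring_of_maximal hs
  exact ⟨k, c, hc, hrs⟩

/-- The partition of `V` into the members of the disjoint family `A` and the singletons of the
points outside them. -/
def setoidOfPairwiseDisjoint (A : ι → Set V) (hA : Pairwise (Disjoint on A)) : Setoid V where
  r x y := x = y ∨ ∃ i, x ∈ A i ∧ y ∈ A i
  iseqv := by
    refine ⟨fun x => .inl rfl, ?_, ?_⟩
    · rintro x y (rfl | ⟨i, hx, hy⟩)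
      exacts [.inl rfl, .inr ⟨i, hy, hx⟩]
    · rintro x y z (rfl | ⟨i, hx, hy⟩) (rfl | ⟨j, hy', hz⟩)
      · exact .inl rfl
      · exact .inr ⟨j, hy', hz⟩
      · exact .inr ⟨i, hx, hy⟩
      · obtain rfl : i = j := hA.eq (Set.not_disjoint_iff.2 ⟨y, hy, hy'⟩)
        exact .inr ⟨i, hx, hz⟩

theorem isAcyclicPartition_setoidOfPairwiseDisjoint [Std.Irrefl D] {A : ι → Set V}
    (hdisj : Pairwise (Disjoint on A)) (hacyc : ∀ i, ¬ HasDicycle D (A i)) :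
    IsAcyclicPartition D (setoidOfPairwiseDisjoint A hdisj) := by
  intro x hx
  by_cases hmem : ∃ i, x ∈ A i
  · obtain ⟨i, hxi⟩ := hmem
    refine hacyc i (hx.mono ?_)
    rintro z (rfl | ⟨j, hxj, hzj⟩)
    · exact hxi
    · rwa [hdisj.eq (Set.not_disjoint_iff.2 ⟨x, hxi, hxj⟩)]
  · refine not_hasDicycle_singleton x (hx.mono ?_)
    rintro z (rfl | ⟨j, hxj, -⟩)
    exacts [rfl, (hmem ⟨j, hxj⟩).elim]

/-- A partial complete acyclic coloring, given by its family of color classes: it satisfies the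
requirements of a complete acyclic coloring, except that the classes need not cover all vertices. -/
structure IsCompleteAcyclicFamily (D : V → V → Prop) (A : ι → Set V) : Prop where
  nonempty : ∀ i, (A i).Nonempty
  disjoint : Pairwise (Disjoint on A)
  acyclic : ∀ i, ¬ HasDicycle D (A i)
  hasDicycle_union : Pairwise fun i j => HasDicycle D (A i ∪ A j)

theorem IsCompleteAcyclicColoring.isCompleteAcyclicFamily {k : ℕ} {c : V → Fin k}
    (hc : IsCompleteAcyclicColoring D c) : IsCompleteAcyclicFamily D fun i => c ⁻¹' {i} where
  nonempty i := hc.1 i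
  disjoint := pairwise_disjoint_fiber c
  acyclic := hc.2.1
  hasDicycle_union := hc.2.2

namespace IsCompleteAcyclicFamily

variable {A : ι → Set V}

theorem comp_injective (hA : IsCompleteAcyclicFamily D A) {g : κ → ι} (hg : Injective g) :
    IsCompleteAcyclicFamily D (A ∘ g) where
  nonempty i := hA.nonempty (g i)
  disjoint := hA.disjoint.comp_of_injective hg
  acyclic i := hA.acyclic (g i)
  hasDicycle_union := hA.hasDicycle_union.comp_of_injective hg

theorem image_iff {f : W → V} (hf : Injective f) {B : ι → Set W} :
    IsCompleteAcyclicFamily D (fun i => f '' B i) ↔ IsCompleteAcyclicFamily (f ⁻¹'o D) B := by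
  have hdisj : Pairwise (Disjoint on fun i => f '' B i) ↔ Pairwise (Disjoint on B) := by
    simp only [Pairwise, onFun, Set.disjoint_image_iff hf]
  have hunion (i j : ι) :
      HasDicycle D (f '' B i ∪ f '' B j) ↔ HasDicycle (f ⁻¹'o D) (B i ∪ B j) := by
    rw [← Set.image_union, hasDicycle_image_iff]
  constructor <;> intro h
  · exact ⟨fun i => (h.nonempty i).of_image, hdisj.1 h.disjoint,
      fun i => mt (hasDicycle_image_iff f _).2 (h.acyclic i),
      fun i j hij => (hunion i j).1 (h.hasDicycle_union hij)⟩
  · exact ⟨fun i => (h.nonempty i).image f, hdisj.2 h.disjoint,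
      fun i => mt (hasDicycle_image_iff f _).1 (h.acyclic i),
      fun i j hij => (hunion i j).2 (h.hasDicycle_union hij)⟩

theorem card_le_of_isAcyclicColoring (hA : IsCompleteAcyclicFamily D A) {k : ℕ} {c : V → Fin k}
    (hc : IsAcyclicColoring D c) (hmono : ∀ i, ∀ x ∈ A i, ∀ y ∈ A i, c x = c y) :
    Nat.card ι ≤ k := by
  choose a ha using hA.nonempty
  have hinj : Injective (c ∘ a) := by
    intro i j (hij : c (a i) = c (a j))
    by_contra hne
    refine hc (c (a i)) ((hA.hasDicycle_union hne).mono (Set.union_subset ?_ ?_))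
    · exact fun x hx => hmono i x hx (a i) (ha i)
    · exact fun x hx => (hmono j x hx (a j) (ha j)).trans hij.symm
  simpa using Nat.card_le_card_of_injective _ hinj

end IsCompleteAcyclicFamily

theorem IsCompleteAcyclicColoring.le_adichromaticNumber [Finite V] {k : ℕ} {c : V → Fin k}
    (hc : IsCompleteAcyclicColoring D c) : k ≤ adichromaticNumber D := by
  refine le_csSup ⟨Nat.card V, ?_⟩ ⟨c, hc⟩
  rintro n ⟨d, hd, -⟩
  simpa using Nat.card_le_card_of_surjective d hd

theorem IsCompleteAcyclicFamily.card_le_adichromaticNumber [Finite V] [Std.Irrefl D]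
    {A : ι → Set V} (hA : IsCompleteAcyclicFamily D A) : Nat.card ι ≤ adichromaticNumber D := by
  obtain ⟨k, c, hc, hker⟩ := (isAcyclicPartition_setoidOfPairwiseDisjoint hA.disjoint
    hA.acyclic).exists_isCompleteAcyclicColoring
  have hmono (i : ι) (x) (hx : x ∈ A i) (y) (hy : y ∈ A i) : c x = c y := hker (.inr ⟨i, hx, hy⟩)
  exact (hA.card_le_of_isAcyclicColoring hc.2.1 hmono).trans hc.le_adichromaticNumber

variable (D) (S : Set V)

instance induceDigraph.instIrrefl [Std.Irrefl D] : Std.Irrefl (induceDigraph D S) :=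
  ⟨fun x => Std.Irrefl.irrefl (r := D) x.1⟩

variable [Finite V] [Std.Irrefl D]

theorem adichromaticNumber_induceDigraph_le :
    adichromaticNumber (induceDigraph D S) ≤ adichromaticNumber D := by
  refine csSup_le' ?_
  rintro k ⟨c, hc⟩
  have hfamily : IsCompleteAcyclicFamily D fun i => Subtype.val '' (c ⁻¹' {i}) :=
    (IsCompleteAcyclicFamily.image_iff Subtype.val_injective).2 hc.isCompleteAcyclicFamily
  simpa using hfamily.card_le_adichromaticNumber

theorem adichromaticNumber_le_induceDigraph_add_ncard_compl :
    adichromaticNumber D ≤ adichromaticNumber (induceDigraph D S) + Sᶜ.ncard := by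
  refine csSup_le' ?_
  rintro k ⟨c, hc⟩
  let kept : Set (Fin k) := (c '' Sᶜ)ᶜ
  let B : kept → Set S := fun i => Subtype.val ⁻¹' (c ⁻¹' {i.1})
  have hB (i : kept) : Subtype.val '' B i = c ⁻¹' {i.1} := by
    refine Set.image_preimage_eq_of_subset fun x hx => ?_
    rw [Subtype.range_coe]
    by_contra hxS
    exact i.2 ⟨x, hxS, hx⟩
  have hfamily : IsCompleteAcyclicFamily (induceDigraph D S) B := by
    refine (IsCompleteAcyclicFamily.image_iff Subtype.val_injective).1 ?_
    simp only [hB]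
    exact hc.isCompleteAcyclicFamily.comp_injective Subtype.val_injective
  calc
    k = kept.ncard + (c '' Sᶜ).ncard := by
      rw [add_comm, Set.ncard_add_ncard_compl, Nat.card_fin]
    _ ≤ adichromaticNumber (induceDigraph D S) + Sᶜ.ncard :=
      add_le_add hfamily.card_le_adichromaticNumber Set.ncard_image_le

theorem adichromatic_vertex_deletion_general :
    adichromaticNumber D - Sᶜ.ncard ≤ adichromaticNumber (induceDigraph D S) ∧
      adichromaticNumber (induceDigraph D S) ≤ adichromaticNumber D :=
  ⟨tsub_le_iff_right.2 (adichromaticNumber_le_induceDigraph_add_ncard_compl D S),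
    adichromaticNumber_induceDigraph_le D S⟩

end AdichromaticNumber

/-- for any vertex `v` of a finite digraph `D`,
`adi(D) − 1 ≤ adi(D − v) ≤ adi(D)`; consequently the adichromatic number is monotone
under induced subdigraphs. -/
theorem adichromatic_vertex_deletion :
    (∀ (V : Type) [Fintype V] (D : V → V → Prop), Irreflexive D → ∀ v : V,
      adichromaticNumber D - 1 ≤ adichromaticNumber (induceDigraph D ({v}ᶜ : Set V)) ∧
      adichromaticNumber (induceDigraph D ({v}ᶜ : Set V)) ≤ adichromaticNumber D) ∧
    (∀ (V : Type) [Fintype V] (D : V → V → Prop), Irreflexive D → ∀ S : Set V,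
      adichromaticNumber (induceDigraph D S) ≤ adichromaticNumber D) := by
  refine ⟨fun V _ D hD v => ?_, fun V _ D hD S => ?_⟩ <;> have : Std.Irrefl D := ⟨hD⟩
  · simpa only [compl_compl, Set.ncard_singleton] using adichromatic_vertex_deletion_general D {v}ᶜ
  · exact (adichromatic_vertex_deletion_general D S).2
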